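/- Let g ∈ GL(4,ℤ) be the block-diagonal matrix with two copies of the block [[0,−1],[1,−1]] on the diagonal (so g has order 3; it is the action on H¹ of a symplectic order-3 automorphism of a 2-torus). Then the induced automorphism ⋀²g of ⋀²ℤ⁴ has order 3, and there exists a generator vol of ⋀⁴ℤ⁴ such that, with respect to the wedge form determined by vol: the invariant lattice T = {x ∈ ⋀²ℤ⁴ : ⋀²g(x) = x} is isometric to U⊕A₂, and the coinvariant lattice S = T^⊥ is isometric to A₂(−1). -/

import Mathlib

set_option synthInstance.maxHeartbeats 1000000
set_option maxHeartbeats 1000000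

open ExteriorAlgebra Module Matrix

noncomputable section

/-- The image of the `n`-th exterior power under the algebra morphism induced by a linear map
lands in the `n`-th exterior power. -/
lemma map_mem_exteriorPower {R M N : Type*} [CommRing R] [AddCommGroup M] [Module R M]
    [AddCommGroup N] [Module R N] (f : M →ₗ[R] N) (n : ℕ) {x : ExteriorAlgebra R M}
    (hx : x ∈ ⋀[R]^n M) : ExteriorAlgebra.map f x ∈ ⋀[R]^n N := by
  rw [← ExteriorAlgebra.ιMulti_span_fixedDegree] at hx ⊢
  induction hx using Submodule.span_induction with
  | mem y hy =>
      obtain ⟨m, rfl⟩ := hy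
      rw [ExteriorAlgebra.map_apply_ιMulti]
      exact Submodule.subset_span ⟨f ∘ m, rfl⟩
  | zero => simp
  | add a b _ _ ha hb => rw [map_add]; exact Submodule.add_mem _ ha hb
  | smul r a _ ha => rw [_root_.map_smul]; exact Submodule.smul_mem _ r ha

/-- The `n`-th exterior power of a linear map. -/
def extPowMap {R M N : Type*} [CommRing R] [AddCommGroup M] [Module R M]
    [AddCommGroup N] [Module R N] (n : ℕ) (f : M →ₗ[R] N) : ⋀[R]^n M →ₗ[R] ⋀[R]^n N :=
  LinearMap.restrict (ExteriorAlgebra.map f).toLinearMap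
    (fun _ hx => map_mem_exteriorPower f n hx)

/-- The restriction of the form `b` to the submodule `T` admits Gram matrix `G` in some
basis; i.e. `(T, b|_T)` is isometric to the lattice with Gram matrix `G`. -/
def HasGramMatrix {M : Type*} [AddCommGroup M] [Module ℤ M] (b : M →ₗ[ℤ] M →ₗ[ℤ] ℤ)
    (T : Submodule ℤ M) {n : ℕ} (G : Matrix (Fin n) (Fin n) ℤ) : Prop :=
  ∃ v : Basis (Fin n) ℤ ↥T, ∀ i j, b (v i : M) (v j : M) = G i j

/-- The orthogonal complement of a submodule `T` with respect to a bilinear form `b`. -/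
def orthCompl {M : Type*} [AddCommGroup M] [Module ℤ M] (b : M →ₗ[ℤ] M →ₗ[ℤ] ℤ)
    (T : Submodule ℤ M) : Submodule ℤ M where
  carrier := {x | ∀ t ∈ T, b x t = 0}
  add_mem' := by
    intro x y hx hy t ht
    simp [map_add, hx t ht, hy t ht]
  zero_mem' := by
    intro t ht
    simp
  smul_mem' := by
    intro c x hx t ht
    simp [_root_.map_smul, hx t ht]

/-!
An endomorphism `f` with `f² + f + 1 = 0` makes the lattice a module over the Eisenstein integers;
let `x, y` be a basis of that module and take `vol = x ∧ y ∧ f x ∧ f y`. In the Plücker coordinates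
`pᵢⱼ` of the basis `x, y, f x, f y` the action of `⋀²f` is linear with coefficients `0, ±1`, and
its fixed vectors are cut out by `p₀₁ = p₂₃` and `p₀₃ = p₁₂ + p₂₃`, while the wedge form is the
polarised Plücker quadric. Up to sign, `x ∧ f x` and `y ∧ f y` span a copy of `U`; it splits off
from the fixed lattice and leaves `A₂`.
-/

section ExtPowMap

variable {R M : Type*} [CommRing R] [AddCommGroup M] [Module R M]

lemma extPowMap_eq_map {N : Type*} [AddCommGroup N] [Module R N] (n : ℕ) (f : M →ₗ[R] N) :
    extPowMap n f = exteriorPower.map n f :=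
  exteriorPower.linearMap_ext <| AlternatingMap.ext fun v =>
    (Subtype.ext (ExteriorAlgebra.map_apply_ιMulti f v)).trans
      (exteriorPower.map_apply_ιMulti f v).symm

lemma extPowMap_pow (n : ℕ) (f : Module.End R M) (k : ℕ) :
    extPowMap n f ^ k = extPowMap n (f ^ k) := by
  simp only [extPowMap_eq_map]
  induction k with
  | zero => exact exteriorPower.map_id.symm
  | succ k ih =>
    rw [pow_succ, ih, pow_succ]
    exact (exteriorPower.map_comp f (f ^ k)).symm

end ExtPowMap

section TopPower

variable {R M : Type*} [CommRing R] [AddCommGroup M] [Module R M] {m n : ℕ}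

/-- The coordinate of the top exterior power with respect to its generator
`e 0 ∧ ⋯ ∧ e (n - 1)`, as the linear form induced by the determinant. -/
def topCoord (e : Basis (Fin n) R M) : ⋀[R]^n M →ₗ[R] R :=
  exteriorPower.alternatingMapLinearEquiv e.det

lemma topCoord_ιMulti (e : Basis (Fin n) R M) (v : Fin n → M) :
    topCoord e (exteriorPower.ιMulti R n v) = e.det v :=
  exteriorPower.alternatingMapLinearEquiv_apply_ιMulti _ _

lemma topCoord_smul_ιMulti (e : Basis (Fin n) R M) (z : ⋀[R]^n M) :
    topCoord e z • exteriorPower.ιMulti R n e = z := by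
  suffices h : (topCoord e).smulRight (exteriorPower.ιMulti R n e) = LinearMap.id from
    LinearMap.congr_fun h z
  refine exteriorPower.linearMap_ext <| Basis.ext_alternating e fun v hv => ?_
  let σ : Equiv.Perm (Fin n) := Equiv.ofBijective v (Finite.injective_iff_bijective.1 hv)
  change topCoord e (exteriorPower.ιMulti R n (e ∘ σ)) • exteriorPower.ιMulti R n e =
    exteriorPower.ιMulti R n (e ∘ σ)
  rw [topCoord_ιMulti, AlternatingMap.map_perm, AlternatingMap.map_perm, Basis.det_self,
    smul_assoc, one_smul]

lemma span_ιMulti_basis (e : Basis (Fin n) R M) :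
    Submodule.span R {exteriorPower.ιMulti R n e} = ⊤ :=
  eq_top_iff.2 fun z _ => Submodule.mem_span_singleton.2 ⟨_, topCoord_smul_ιMulti e z⟩

/-- The wedge pairing `⋀ᵐM × ⋀ⁿM → R` obtained by reading the product in the top exterior power
`⋀ᵐ⁺ⁿM` as a multiple of the generator `e 0 ∧ ⋯ ∧ e (m + n - 1)`. -/
def wedgeForm (e : Basis (Fin (m + n)) R M) : ⋀[R]^m M →ₗ[R] ⋀[R]^n M →ₗ[R] R :=
  LinearMap.mk₂ R (fun x y => topCoord e ⟨x * y, SetLike.mul_mem_graded x.2 y.2⟩)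
    (fun x x' y => by rw [← map_add]; congr 1; exact Subtype.ext (add_mul _ _ _))
    (fun c x y => by rw [← map_smul]; congr 1; exact Subtype.ext (smul_mul_assoc _ _ _))
    (fun x y y' => by rw [← map_add]; congr 1; exact Subtype.ext (mul_add _ _ _))
    (fun c x y => by rw [← map_smul]; congr 1; exact Subtype.ext (mul_smul_comm _ _ _))

lemma wedgeForm_ιMulti (e : Basis (Fin (m + n)) R M) (v : Fin m → M) (w : Fin n → M) :
    wedgeForm e (exteriorPower.ιMulti R m v) (exteriorPower.ιMulti R n w) =
      e.det (Fin.append v w) := by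
  rw [← topCoord_ιMulti]
  exact congrArg (topCoord e) (Subtype.ext (ExteriorAlgebra.ιMulti_mul_ιMulti v w))

lemma eq_wedgeForm {e : Basis (Fin (m + n)) R M} {b : ⋀[R]^m M →ₗ[R] ⋀[R]^n M →ₗ[R] R}
    (hb : ∀ (x : ⋀[R]^m M) (y : ⋀[R]^n M), (x : ExteriorAlgebra R M) * (y : ExteriorAlgebra R M) =
      b x y • (exteriorPower.ιMulti R (m + n) e : ExteriorAlgebra R M)) :
    b = wedgeForm e := by
  refine LinearMap.ext₂ fun x y => ?_
  have hxy : (⟨x * y, SetLike.mul_mem_graded x.2 y.2⟩ : ⋀[R]^(m + n) M) =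
      b x y • exteriorPower.ιMulti R (m + n) e := Subtype.ext (hb x y)
  rw [wedgeForm, LinearMap.mk₂_apply, hxy, map_smul, topCoord_ιMulti, Basis.det_self, smul_eq_mul,
    mul_one]

end TopPower

section Plucker

variable {R M ι : Type*} [CommRing R] [AddCommGroup M] [Module R M]

/-- The Plücker coordinate of a bivector: the coefficient of `e i ∧ e j`, in the basis of `⋀²M`
induced by `e`, when `i < j`. -/
def plucker (e : Basis ι R M) (i j : ι) : ⋀[R]^2 M →ₗ[R] R :=
  exteriorPower.pairingDual R M 2 (exteriorPower.ιMulti R 2 ![e.coord i, e.coord j])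

lemma plucker_ιMulti (e : Basis ι R M) (i j : ι) (v : Fin 2 → M) :
    plucker e i j (exteriorPower.ιMulti R 2 v) =
      e.repr (v 0) i * e.repr (v 1) j - e.repr (v 0) j * e.repr (v 1) i := by
  simp [plucker, exteriorPower.pairingDual_ιMulti_ιMulti, Matrix.det_fin_two]

lemma bivector_ext [LinearOrder ι] (e : Basis ι R M) {x y : ⋀[R]^2 M}
    (h : ∀ i j, i < j → plucker e i j x = plucker e i j y) : x = y := by
  refine (e.exteriorPower 2).ext_elem fun s => ?_
  let i := Set.powersetCard.ofFinEmbEquiv.symm s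
  have hs : exteriorPower.ιMultiDual R 2 e s = plucker e (i 0) (i 1) := by
    unfold exteriorPower.ιMultiDual plucker exteriorPower.ιMulti_family
    congr 2
  simpa only [exteriorPower.basis_repr_apply, hs] using h _ _ (i.strictMono Fin.zero_lt_one)

lemma bivector_ext_fin_four (e : Basis (Fin 4) R M) {x y : ⋀[R]^2 M}
    (h01 : plucker e 0 1 x = plucker e 0 1 y) (h02 : plucker e 0 2 x = plucker e 0 2 y)
    (h03 : plucker e 0 3 x = plucker e 0 3 y) (h12 : plucker e 1 2 x = plucker e 1 2 y)
    (h13 : plucker e 1 3 x = plucker e 1 3 y) (h23 : plucker e 2 3 x = plucker e 2 3 y) :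
    x = y := by
  refine bivector_ext e fun i j hij => ?_
  fin_cases i <;> fin_cases j <;> first | assumption | simp at hij

lemma wedgeForm_apply_fin_four (e : Basis (Fin 4) R M) (x y : ⋀[R]^2 M) :
    wedgeForm (m := 2) (n := 2) e x y =
      plucker e 0 1 x * plucker e 2 3 y - plucker e 0 2 x * plucker e 1 3 y +
      plucker e 0 3 x * plucker e 1 2 y + plucker e 1 2 x * plucker e 0 3 y -
      plucker e 1 3 x * plucker e 0 2 y + plucker e 2 3 x * plucker e 0 1 y := by
  let p (i j k l : Fin 4) : ⋀[R]^2 M →ₗ[R] ⋀[R]^2 M →ₗ[R] R :=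
    (LinearMap.mul R R).compl₁₂ (plucker e i j) (plucker e k l)
  suffices h : wedgeForm (m := 2) (n := 2) e =
      p 0 1 2 3 - p 0 2 1 3 + p 0 3 1 2 + p 1 2 0 3 - p 1 3 0 2 + p 2 3 0 1 from
    LinearMap.congr_fun₂ h x y
  ext v w
  have append_eq : Fin.append v w = ![v 0, v 1, w 0, w 1] := by
    ext i : 1
    fin_cases i <;> rfl
  simp [p, wedgeForm_ιMulti, append_eq, plucker_ιMulti, Basis.det_apply, Basis.toMatrix_apply,
    Matrix.det_succ_row_zero, Fin.sum_univ_succ, Fin.succAbove]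
  ring

end Plucker

lemma HasGramMatrix.of_dual {M : Type*} [AddCommGroup M] [Module ℤ M]
    {b : M →ₗ[ℤ] M →ₗ[ℤ] ℤ} {T : Submodule ℤ M} {n : ℕ} {G : Matrix (Fin n) (Fin n) ℤ}
    {v : Fin n → M} {c : Fin n → Dual ℤ M} (hv : ∀ i, v i ∈ T)
    (hc : ∀ i j, c i (v j) = (1 : Matrix (Fin n) (Fin n) ℤ) i j)
    (hT : ∀ x ∈ T, (∀ i, c i x = 0) → x = 0) (hG : ∀ i j, b (v i) (v j) = G i j) :
    HasGramMatrix b T G := by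
  let w (i : Fin n) : T := ⟨v i, hv i⟩
  have indep : LinearIndependent ℤ w := Fintype.linearIndependent_iff.2 fun a ha i => by
    simpa [w, hc, Matrix.one_apply] using congrArg (fun x : T => c i x) ha
  have expansion (x : T) : x = ∑ i, c i x • w i := Subtype.ext <| sub_eq_zero.1 <|
    hT _ (x - ∑ i, c i x • w i).2 fun i => by simp [w, hc, Matrix.one_apply]
  have spanning : ⊤ ≤ Submodule.span ℤ (Set.range w) := fun x _ => by
    rw [expansion x]
    exact Submodule.sum_mem _ fun i _ => Submodule.smul_mem _ _ (Submodule.subset_span ⟨i, rfl⟩)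
  exact ⟨Basis.mk indep spanning, fun i j => by simpa using hG i j⟩

section Eisenstein

variable {R M : Type*} [CommRing R] [AddCommGroup M] [Module R M]
  {f : Module.End R M} {e : Basis (Fin 4) R M}

/-- A basis of the form `(x, y, f x, f y)` for an endomorphism `f` with `f ^ 2 + f + 1 = 0`.
When `R = ℤ` and `f` is multiplication by `ω` on a module over the Eisenstein integers `ℤ[ω]`,
this is a `ℤ[ω]`-basis `(x, y)`. -/
structure IsEisensteinBasis (f : Module.End R M) (e : Basis (Fin 4) R M) : Prop where
  apply_zero : f (e 0) = e 2
  apply_one : f (e 1) = e 3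
  sq_add_self_add_one : f ^ 2 + f + 1 = 0

namespace IsEisensteinBasis

lemma apply_apply (h : IsEisensteinBasis f e) (v : M) : f (f v) = -v - f v := by
  have hv : f (f v) + f v + v = 0 := LinearMap.congr_fun h.sq_add_self_add_one v
  rw [← sub_eq_zero, ← hv]
  abel

lemma apply_two (h : IsEisensteinBasis f e) : f (e 2) = -e 0 - e 2 := by
  rw [← h.apply_zero, h.apply_apply]

lemma apply_three (h : IsEisensteinBasis f e) : f (e 3) = -e 1 - e 3 := by
  rw [← h.apply_one, h.apply_apply]

lemma coord_comp (h : IsEisensteinBasis f e) (i : Fin 4) :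
    e.coord i ∘ₗ f = (![-e.coord 2, -e.coord 3, e.coord 0 - e.coord 2,
      e.coord 1 - e.coord 3] : Fin 4 → Dual R M) i := by
  refine e.ext fun j => ?_
  fin_cases i <;> fin_cases j <;>
    simp [h.apply_zero, h.apply_one, h.apply_two, h.apply_three]

lemma repr_apply (h : IsEisensteinBasis f e) (v : M) (i : Fin 4) :
    e.repr (f v) i = ![-e.repr v 2, -e.repr v 3, e.repr v 0 - e.repr v 2,
      e.repr v 1 - e.repr v 3] i := by
  have hi := LinearMap.congr_fun (h.coord_comp i) v
  fin_cases i <;> exact hi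

lemma plucker_comp_extPowMap (h : IsEisensteinBasis f e) :
    plucker e 0 1 ∘ₗ extPowMap 2 f = plucker e 2 3 ∧
    plucker e 0 2 ∘ₗ extPowMap 2 f = plucker e 0 2 ∧
    plucker e 0 3 ∘ₗ extPowMap 2 f = plucker e 1 2 + plucker e 2 3 ∧
    plucker e 1 2 ∘ₗ extPowMap 2 f = plucker e 0 3 - plucker e 2 3 ∧
    plucker e 1 3 ∘ₗ extPowMap 2 f = plucker e 1 3 ∧
    plucker e 2 3 ∘ₗ extPowMap 2 f =
      plucker e 0 1 - plucker e 0 3 + plucker e 1 2 + plucker e 2 3 := by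
  simp only [extPowMap_eq_map]
  refine ⟨?_, ?_, ?_, ?_, ?_, ?_⟩ <;> ext v <;> simp [plucker_ιMulti, h.repr_apply] <;> ring

lemma orderOf_extPowMap [Nontrivial R] (h : IsEisensteinBasis f e) :
    orderOf (extPowMap 2 f) = 3 := by
  have : Fact (Nat.Prime 3) := ⟨Nat.prime_three⟩
  have f_cube : f ^ 3 = 1 := by
    have factor : f ^ 3 - 1 = (f - 1) * (f ^ 2 + f + 1) := by noncomm_ring
    rwa [h.sq_add_self_add_one, mul_zero, sub_eq_zero] at factor
  refine orderOf_eq_prime ?_ fun hφ => ?_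
  · rw [extPowMap_pow, f_cube, ← pow_zero f, ← extPowMap_pow, pow_zero]
  · have h01 := LinearMap.congr_fun h.plucker_comp_extPowMap.1
      (exteriorPower.ιMulti R 2 ![e 0, e 1])
    simp [hφ, plucker_ιMulti] at h01

lemma mem_ker_extPowMap_sub_id (h : IsEisensteinBasis f e) {x : ⋀[R]^2 M} :
    x ∈ LinearMap.ker (extPowMap 2 f - LinearMap.id) ↔
      plucker e 0 1 x = plucker e 2 3 x ∧
      plucker e 0 3 x = plucker e 1 2 x + plucker e 2 3 x := by
  obtain ⟨h01, h02, h03, h12, h13, h23⟩ := h.plucker_comp_extPowMap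
  rw [LinearMap.mem_ker, LinearMap.sub_apply, LinearMap.id_apply, sub_eq_zero]
  constructor
  · intro hx
    have h01x := LinearMap.congr_fun h01 x
    have h03x := LinearMap.congr_fun h03 x
    rw [LinearMap.comp_apply, hx] at h01x h03x
    exact ⟨h01x, h03x⟩
  · rintro ⟨hx01, hx03⟩
    apply bivector_ext_fin_four e <;> rw [← LinearMap.comp_apply]
    · rw [h01, hx01]
    · rw [h02]
    · rw [h03, LinearMap.add_apply, hx03]
    · rw [h12, LinearMap.sub_apply, hx03, add_sub_cancel_right]
    · rw [h13]
    · simp only [h23, LinearMap.add_apply, LinearMap.sub_apply, hx01, hx03]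
      ring

/-- For an Eisenstein basis `e` of `f`, a basis of the bivectors fixed by `⋀²f` adapted to the
splitting `U ⊕ A₂`; the sign makes the first two vectors pair to `+1`. -/
def invariantVectors (e : Basis (Fin 4) R M) : Fin 4 → ⋀[R]^2 M :=
  let w (i j : Fin 4) := exteriorPower.ιMulti R 2 ![e i, e j]
  ![w 0 2, -w 1 3, w 0 1 + w 0 3 + w 2 3, w 0 3 + w 1 2]

/-- For an Eisenstein basis `e` of `f`, a basis of the orthogonal complement of the bivectors fixed
by `⋀²f`. -/
def coinvariantVectors (e : Basis (Fin 4) R M) : Fin 2 → ⋀[R]^2 M :=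
  let w (i j : Fin 4) := exteriorPower.ιMulti R 2 ![e i, e j]
  ![w 0 1 + w 0 3 - w 1 2, w 2 3 + w 0 3 - w 1 2]

lemma invariantVectors_mem (h : IsEisensteinBasis f e) (i : Fin 4) :
    invariantVectors e i ∈ LinearMap.ker (extPowMap 2 f - LinearMap.id) := by
  rw [h.mem_ker_extPowMap_sub_id]
  fin_cases i <;> simp [invariantVectors, plucker_ιMulti]

end IsEisensteinBasis

end Eisenstein

namespace IsEisensteinBasis

variable {M : Type*} [AddCommGroup M] [Module ℤ M] {f : Module.End ℤ M} {e : Basis (Fin 4) ℤ M}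

lemma mem_orthCompl_ker_extPowMap_sub_id (h : IsEisensteinBasis f e) {x : ⋀[ℤ]^2 M} :
    x ∈ orthCompl (wedgeForm (m := 2) (n := 2) e)
        (LinearMap.ker (extPowMap 2 f - LinearMap.id)) ↔
      plucker e 0 2 x = 0 ∧ plucker e 1 3 x = 0 ∧ plucker e 1 2 x = -plucker e 0 3 x ∧
      plucker e 0 3 x = plucker e 0 1 x + plucker e 2 3 x := by
  constructor
  · intro hx
    have h13 : plucker e 1 3 x = 0 := by
      simpa [wedgeForm_apply_fin_four, invariantVectors, plucker_ιMulti] using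
        hx _ (h.invariantVectors_mem 0)
    have h02 : plucker e 0 2 x = 0 := by
      simpa [wedgeForm_apply_fin_four, invariantVectors, plucker_ιMulti] using
        hx _ (h.invariantVectors_mem 1)
    have h01_h12_h23 : plucker e 0 1 x + plucker e 1 2 x + plucker e 2 3 x = 0 := by
      simpa [wedgeForm_apply_fin_four, invariantVectors, plucker_ιMulti] using
        hx _ (h.invariantVectors_mem 2)
    have h03_h12 : plucker e 0 3 x + plucker e 1 2 x = 0 := by
      simpa [wedgeForm_apply_fin_four, invariantVectors, plucker_ιMulti] using
        hx _ (h.invariantVectors_mem 3)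
    exact ⟨h02, h13, by linarith, by linarith⟩
  · rintro ⟨h02, h13, h12, h03⟩ t ht
    obtain ⟨ht01, ht03⟩ := h.mem_ker_extPowMap_sub_id.1 ht
    rw [wedgeForm_apply_fin_four, h02, h13, h12, h03, ht01, ht03]
    ring

lemma hasGramMatrix_ker (h : IsEisensteinBasis f e) :
    HasGramMatrix (wedgeForm (m := 2) (n := 2) e)
      (LinearMap.ker (extPowMap 2 f - LinearMap.id))
      !![0, 1, 0, 0; 1, 0, 0, 0; 0, 0, 2, 1; 0, 0, 1, 2] := by
  refine .of_dual (v := invariantVectors e)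
    (c := ![plucker e 0 2, -plucker e 1 3, plucker e 2 3, plucker e 1 2])
    h.invariantVectors_mem (fun i j => ?_) (fun x hx hc => ?_) fun i j => ?_
  · fin_cases i <;> fin_cases j <;> simp [invariantVectors, plucker_ιMulti]
  · obtain ⟨h01, h03⟩ := h.mem_ker_extPowMap_sub_id.1 hx
    have h02 : plucker e 0 2 x = 0 := hc 0
    have h13 : plucker e 1 3 x = 0 := neg_eq_zero.1 (hc 1)
    have h23 : plucker e 2 3 x = 0 := hc 2
    have h12 : plucker e 1 2 x = 0 := hc 3
    apply bivector_ext_fin_four e <;> simp [h01, h02, h03, h12, h13, h23]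
  · fin_cases i <;> fin_cases j <;>
      simp [wedgeForm_apply_fin_four, invariantVectors, plucker_ιMulti]

lemma hasGramMatrix_orthCompl (h : IsEisensteinBasis f e) :
    HasGramMatrix (wedgeForm (m := 2) (n := 2) e)
      (orthCompl (wedgeForm (m := 2) (n := 2) e)
        (LinearMap.ker (extPowMap 2 f - LinearMap.id)))
      !![-2, -1; -1, -2] := by
  refine .of_dual (v := coinvariantVectors e) (c := ![plucker e 0 1, plucker e 2 3])
    (fun i => ?_) (fun i j => ?_) (fun x hx hc => ?_) fun i j => ?_
  · rw [h.mem_orthCompl_ker_extPowMap_sub_id]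
    fin_cases i <;> simp [coinvariantVectors, plucker_ιMulti]
  · fin_cases i <;> fin_cases j <;> simp [coinvariantVectors, plucker_ιMulti]
  · obtain ⟨h02, h13, h12, h03⟩ := h.mem_orthCompl_ker_extPowMap_sub_id.1 hx
    have h01 : plucker e 0 1 x = 0 := hc 0
    have h23 : plucker e 2 3 x = 0 := hc 1
    apply bivector_ext_fin_four e <;> simp [h01, h02, h03, h12, h13, h23]
  · fin_cases i <;> fin_cases j <;>
      simp [wedgeForm_apply_fin_four, coinvariantVectors, plucker_ιMulti]

end IsEisensteinBasis

lemma isEisensteinBasis_of_matrix {f : Module.End ℤ (Fin 4 → ℤ)}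
    (hf : ∀ v, f v = !![0, -1, 0, 0; 1, -1, 0, 0; 0, 0, 0, -1; 0, 0, 1, -1].mulVec v) :
    IsEisensteinBasis f ((Pi.basisFun ℤ (Fin 4)).reindex (Equiv.swap 1 2)) where
  apply_zero := by
    rw [hf]
    ext i
    fin_cases i <;> simp [Equiv.swap_apply_def]
  apply_one := by
    rw [hf]
    ext i
    fin_cases i <;> simp [Equiv.swap_apply_def]
  sq_add_self_add_one := by
    have f_eq : f = Matrix.toLinAlgEquiv' !![0, -1, 0, 0; 1, -1, 0, 0; 0, 0, 0, -1; 0, 0, 1, -1] :=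
      LinearMap.ext hf
    rw [f_eq, ← map_pow, ← map_add, ← map_one Matrix.toLinAlgEquiv', ← map_add,
      map_eq_zero_iff _ Matrix.toLinAlgEquiv'.injective]
    decide

theorem stmt_19_general {M : Type*} [AddCommGroup M] [Module ℤ M] {f : Module.End ℤ M}
    {e : Basis (Fin 4) ℤ M} (h : IsEisensteinBasis f e) :
    orderOf (extPowMap 2 f) = 3 ∧
    ∃ vol : ⋀[ℤ]^4 M, Submodule.span ℤ {vol} = ⊤ ∧
      ∀ b : ⋀[ℤ]^2 M →ₗ[ℤ] ⋀[ℤ]^2 M →ₗ[ℤ] ℤ,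
        (∀ x y : ⋀[ℤ]^2 M, (x : ExteriorAlgebra ℤ M) * (y : ExteriorAlgebra ℤ M) =
          b x y • (vol : ExteriorAlgebra ℤ M)) →
        HasGramMatrix b (LinearMap.ker (extPowMap 2 f - LinearMap.id))
            !![0, 1, 0, 0; 1, 0, 0, 0; 0, 0, 2, 1; 0, 0, 1, 2] ∧
        HasGramMatrix b (orthCompl b (LinearMap.ker (extPowMap 2 f - LinearMap.id)))
            !![-2, -1; -1, -2] := by
  refine ⟨h.orderOf_extPowMap, exteriorPower.ιMulti ℤ 4 e, span_ιMulti_basis e, fun b hb => ?_⟩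
  obtain rfl := eq_wedgeForm (m := 2) (n := 2) hb
  exact ⟨h.hasGramMatrix_ker, h.hasGramMatrix_orthCompl⟩

/-- For the order-3 matrix `g` (the action on `H¹` of a symplectic order-3 automorphism of a
`2`-torus), the induced automorphism `⋀²g` of `⋀²ℤ⁴` has order 3 and, for a suitable
generator `vol` of `⋀⁴ℤ⁴` and associated wedge form, the invariant lattice `T` is isometric
to `U ⊕ A₂` and the coinvariant lattice `S = T^⊥` is isometric to `A₂(-1)`. -/
theorem stmt_19 (g : Matrix (Fin 4) (Fin 4) ℤ)
    (hg : g = !![0, -1, 0, 0; 1, -1, 0, 0; 0, 0, 0, -1; 0, 0, 1, -1])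
    (gE : (Fin 4 → ℤ) ≃ₗ[ℤ] (Fin 4 → ℤ)) (hgE : ∀ v, gE v = g.mulVec v) :
    orderOf (extPowMap 2 (gE : (Fin 4 → ℤ) →ₗ[ℤ] (Fin 4 → ℤ))) = 3 ∧
    ∃ vol : ⋀[ℤ]^4 (Fin 4 → ℤ), Submodule.span ℤ {vol} = ⊤ ∧
      ∀ b : ⋀[ℤ]^2 (Fin 4 → ℤ) →ₗ[ℤ] ⋀[ℤ]^2 (Fin 4 → ℤ) →ₗ[ℤ] ℤ,
        (∀ x y : ⋀[ℤ]^2 (Fin 4 → ℤ),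
          (x : ExteriorAlgebra ℤ (Fin 4 → ℤ)) * (y : ExteriorAlgebra ℤ (Fin 4 → ℤ))
            = b x y • (vol : ExteriorAlgebra ℤ (Fin 4 → ℤ))) →
        HasGramMatrix b
            (LinearMap.ker (extPowMap 2 (gE : (Fin 4 → ℤ) →ₗ[ℤ] (Fin 4 → ℤ)) - LinearMap.id))
            !![0, 1, 0, 0; 1, 0, 0, 0; 0, 0, 2, 1; 0, 0, 1, 2] ∧
        HasGramMatrix b
            (orthCompl b
              (LinearMap.ker (extPowMap 2 (gE : (Fin 4 → ℤ) →ₗ[ℤ] (Fin 4 → ℤ)) - LinearMap.id)))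
            !![-2, -1; -1, -2] := by
  subst hg
  exact stmt_19_general (isEisensteinBasis_of_matrix hgE)
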